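/- arXiv:1308.1293 — 3 statements merged into one kernel-verified Lean document; each statement's English description precedes it below -/
import Mathlib

section
/- Let n₁, n₂ ∈ ℕ, c > 0, w ∈ ℝ^{n₁+n₂+n₁}, C ∈ ℝ, and let H : ℝ^{n₁} × ℝ^{n₂} × ℝ^{n₁} → ℝ ∪ {+∞} be measurable with H(x, z, y) ≥ c‖(x,z,y)‖² + ⟨w, (x,z,y)⟩ + C for all (x, z, y). Then the kernel k(x, y) = ∫_{ℝ^{n₂}} e^{−H(x,z,y)} dz is finite for all (x,y) and belongs to L²(ℝ^{n₁} × ℝ^{n₁}) with respect to Lebesgue measure. -/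
open MeasureTheory
open scoped ENNReal Classical

noncomputable section

/-!
Since `H` lies above `c‖x‖² + c‖z‖² + c‖y‖²` plus affine terms, `e^{-H}` is dominated by a product
of a Gaussian in `z` and a Gaussian in `(x, y)`. Integrating out `z` leaves a constant multiple of
a Gaussian in `(x, y)`, and Gaussians lie in every `Lᵖ` because their powers are again Gaussians.
-/

section QuadraticPotential

variable {ι κ : Type*} [Fintype ι] [Fintype κ] {c : ℝ}

/-- The potential `c‖x‖² + ⟨w, x⟩` on `ℝ^ι`, with the Euclidean norm and inner product written out
in coordinates because `ι → ℝ` carries the sup norm. Its exponential `e^{-(c‖x‖² + ⟨w, x⟩)}` is an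
unnormalised Gaussian. -/
def quadraticPotential (c : ℝ) (w x : ι → ℝ) : ℝ :=
  c * ∑ i, x i ^ 2 + ∑ i, w i * x i

@[fun_prop]
lemma continuous_quadraticPotential (c : ℝ) (w : ι → ℝ) : Continuous (quadraticPotential c w) := by
  unfold quadraticPotential
  fun_prop

lemma mul_quadraticPotential (r c : ℝ) (w x : ι → ℝ) :
    r * quadraticPotential c w x = quadraticPotential (r * c) (r • w) x := by
  simp only [quadraticPotential, Pi.smul_apply, smul_eq_mul, mul_add, mul_assoc, Finset.mul_sum]

lemma quadraticPotential_sumElim (c : ℝ) (w x : ι → ℝ) (w' y : κ → ℝ) :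
    quadraticPotential c (Sum.elim w w') (Sum.elim x y) =
      quadraticPotential c w x + quadraticPotential c w' y := by
  simp only [quadraticPotential, Fintype.sum_sum_type, Sum.elim_inl, Sum.elim_inr]
  ring

lemma neg_sum_sq_div_le_quadraticPotential (hc : 0 < c) (w x : ι → ℝ) :
    -(∑ i, w i ^ 2) / (4 * c) ≤ quadraticPotential c w x := by
  rw [quadraticPotential, Finset.mul_sum, ← Finset.sum_add_distrib, ← Finset.sum_neg_distrib,
    Finset.sum_div]
  refine Finset.sum_le_sum fun i _ ↦ ?_
  have complete_square :
      c * x i ^ 2 + w i * x i - -w i ^ 2 / (4 * c) = (2 * c * x i + w i) ^ 2 / (4 * c) := by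
    field
  have : 0 ≤ (2 * c * x i + w i) ^ 2 / (4 * c) := by positivity
  linarith

lemma integrable_exp_neg_quadraticPotential (hc : 0 < c) (w : ι → ℝ) :
    Integrable fun x ↦ Real.exp (-quadraticPotential c w x) := by
  have hcomplex := GaussianFourier.integrable_cexp_neg_mul_sum_add (b := c)
    (by simpa using hc) (fun i ↦ -(w i : ℂ))
  refine hcomplex.norm.congr (.of_forall fun x ↦ ?_)
  simp only [Complex.norm_exp, quadraticPotential]
  norm_cast
  simp only [neg_mul, Finset.sum_neg_distrib, neg_add]

lemma memLp_exp_neg_quadraticPotential (hc : 0 < c) (w : ι → ℝ) (p : ℝ≥0∞) :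
    MemLp (fun x ↦ Real.exp (-quadraticPotential c w x)) p := by
  have hmeas : AEStronglyMeasurable fun x ↦ Real.exp (-quadraticPotential c w x) := by fun_prop
  rcases eq_or_ne p 0 with rfl | hp0
  · exact memLp_zero_iff_aestronglyMeasurable.mpr hmeas
  rcases eq_or_ne p ∞ with rfl | hptop
  · refine memLp_top_of_bound hmeas (Real.exp (-(-(∑ i, w i ^ 2) / (4 * c))))
      (.of_forall fun x ↦ ?_)
    rw [Real.norm_of_nonneg (Real.exp_nonneg _)]
    gcongr
    exact neg_sum_sq_div_le_quadraticPotential hc w x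
  · rw [← integrable_norm_rpow_iff hmeas hp0 hptop]
    have hpc : 0 < p.toReal * c := mul_pos (ENNReal.toReal_pos hp0 hptop) hc
    refine (integrable_exp_neg_quadraticPotential hpc (p.toReal • w)).congr (.of_forall fun x ↦ ?_)
    simp only [← mul_quadraticPotential, Real.norm_of_nonneg (Real.exp_nonneg _), ← Real.exp_mul]
    ring_nf

lemma memLp_exp_neg_quadraticPotential_add (hc : 0 < c) (w : ι → ℝ) (w' : κ → ℝ) (p : ℝ≥0∞) :
    MemLp (fun q : (ι → ℝ) × (κ → ℝ) ↦
      Real.exp (-(quadraticPotential c w q.1 + quadraticPotential c w' q.2))) p := by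
  have hcomp := (memLp_exp_neg_quadraticPotential hc (Sum.elim w w') p).comp_measurePreserving
    (volume_measurePreserving_sumPiEquivProdPi_symm fun _ : ι ⊕ κ ↦ ℝ)
  refine hcomp.congr_norm (by fun_prop) (.of_forall fun q ↦ ?_)
  rw [← quadraticPotential_sumElim]
  rfl

end QuadraticPotential

section ExpNegKernel

lemma ofReal_ite_exp_neg_toReal {h : EReal} (hbot : h ≠ ⊥) :
    ENNReal.ofReal (if h = ⊤ then 0 else Real.exp (-h.toReal)) = EReal.exp (-h) := by
  induction h with
  | bot => exact absurd rfl hbot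
  | top => simp
  | coe r => simp [← EReal.coe_neg]

variable {X Y Z : Type*} [MeasurableSpace Z] {ν : Measure Z}
  {H : X × Z × Y → EReal} {a : X × Y → ℝ} {b : Z → ℝ}

/-- The kernel `k(x, y) = ∫ e^{-H(x, z, y)} dν(z)` of a Hamiltonian `H`, as a function of the pair
`(x, y)`. It is `ℝ≥0∞`-valued, so that it is meaningful before its finiteness is known. -/
def expNegKernel (ν : Measure Z) (H : X × Z × Y → EReal) (q : X × Y) : ℝ≥0∞ :=
  ∫⁻ z, EReal.exp (-H (q.1, z, q.2)) ∂ν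

lemma expNegKernel_le (hab : ∀ x z y, ((a (x, y) + b z : ℝ) : EReal) ≤ H (x, z, y)) (q : X × Y) :
    expNegKernel ν H q ≤
      (∫⁻ z, ENNReal.ofReal (Real.exp (-b z)) ∂ν) * ENNReal.ofReal (Real.exp (-a q)) := by
  rw [← lintegral_mul_const' _ _ ENNReal.ofReal_ne_top]
  refine lintegral_mono fun z ↦ ?_
  calc EReal.exp (-H (q.1, z, q.2))
      ≤ EReal.exp (-((a q + b z : ℝ) : EReal)) :=
        EReal.exp_monotone (EReal.neg_le_neg_iff.mpr (hab q.1 z q.2))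
    _ = ENNReal.ofReal (Real.exp (-b z)) * ENNReal.ofReal (Real.exp (-a q)) := by
        rw [← EReal.coe_neg, EReal.exp_coe, ← ENNReal.ofReal_mul (Real.exp_nonneg _),
          ← Real.exp_add, neg_add_rev]

lemma expNegKernel_lt_top (hab : ∀ x z y, ((a (x, y) + b z : ℝ) : EReal) ≤ H (x, z, y))
    (hb : Integrable (fun z ↦ Real.exp (-b z)) ν) (q : X × Y) :
    expNegKernel ν H q < ∞ :=
  (expNegKernel_le hab q).trans_lt (ENNReal.mul_lt_top hb.lintegral_lt_top ENNReal.ofReal_lt_top)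

variable [MeasurableSpace X] [MeasurableSpace Y]

lemma measurable_expNegKernel [SFinite ν] (hH : Measurable H) :
    Measurable (expNegKernel ν H) := by
  have hswap : Measurable fun r : (X × Y) × Z ↦ EReal.exp (-H (r.1.1, r.2, r.1.2)) :=
    EReal.measurable_exp.comp (hH.comp (by fun_prop)).neg
  exact hswap.lintegral_prod_right'

lemma memLp_expNegKernel [SFinite ν] {μ : Measure (X × Y)} {p : ℝ≥0∞} (hH : Measurable H)
    (hab : ∀ x z y, ((a (x, y) + b z : ℝ) : EReal) ≤ H (x, z, y))
    (hb : Integrable (fun z ↦ Real.exp (-b z)) ν)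
    (ha : MemLp (fun q ↦ Real.exp (-a q)) p μ) :
    MemLp (expNegKernel ν H) p μ := by
  refine ha.of_le_mul' (c := (∫⁻ z, ENNReal.ofReal (Real.exp (-b z)) ∂ν).toNNReal)
    (measurable_expNegKernel hH).aestronglyMeasurable (.of_forall fun q ↦ ?_)
  rw [ENNReal.coe_toNNReal hb.lintegral_lt_top.ne, enorm_eq_self,
    Real.enorm_of_nonneg (Real.exp_nonneg _)]
  exact expNegKernel_le hab q

end ExpNegKernel

theorem statement13_general {ι κ τ : Type*} [Fintype ι] [Fintype κ] [Fintype τ]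
    {c : ℝ} (hc : 0 < c) (w₁ : ι → ℝ) (w₂ : κ → ℝ) (w₃ : τ → ℝ) (C : ℝ)
    {H : (ι → ℝ) × (κ → ℝ) × (τ → ℝ) → EReal} (hmeas : Measurable H)
    (hlow : ∀ x z y,
      ((c * ((∑ i, x i ^ 2) + (∑ j, z j ^ 2) + (∑ i, y i ^ 2))
          + ((∑ i, w₁ i * x i) + (∑ j, w₂ j * z j) + (∑ i, w₃ i * y i)) + C : ℝ) : EReal)
        ≤ H (x, z, y)) (p : ℝ≥0∞) :
    (∀ q, expNegKernel volume H q < ∞) ∧ MemLp (expNegKernel volume H) p := by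
  let a (q : (ι → ℝ) × (τ → ℝ)) : ℝ := quadraticPotential c w₁ q.1 + quadraticPotential c w₃ q.2
  have hsplit x z y : ((a (x, y) + (quadraticPotential c w₂ z + C) : ℝ) : EReal) ≤ H (x, z, y) := by
    refine (EReal.coe_le_coe_iff.mpr (le_of_eq ?_)).trans (hlow x z y)
    simp only [a, quadraticPotential]
    ring
  have hz : Integrable fun z ↦ Real.exp (-(quadraticPotential c w₂ z + C)) := by
    simpa only [neg_add, Real.exp_add] using
      (integrable_exp_neg_quadraticPotential hc w₂).mul_const (Real.exp (-C))
  have hxy : MemLp (fun q ↦ Real.exp (-a q)) p := memLp_exp_neg_quadraticPotential_add hc w₁ w₃ p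
  exact ⟨expNegKernel_lt_top hsplit hz, memLp_expNegKernel hmeas hsplit hz hxy⟩

/-- if `H : ℝ^{n₁} × ℝ^{n₂} × ℝ^{n₁} → ℝ ∪ {+∞}` is measurable and bounded
below by `c‖(x,z,y)‖² + ⟨w,(x,z,y)⟩ + C` with `c > 0`, then the kernel
`k(x,y) = ∫ e^{-H(x,z,y)} dz` is finite everywhere and square integrable on
`ℝ^{n₁} × ℝ^{n₁}`. -/
theorem statement13 (n₁ n₂ : ℕ) (c : ℝ) (hc : 0 < c)
    (w₁ : Fin n₁ → ℝ) (w₂ : Fin n₂ → ℝ) (w₃ : Fin n₁ → ℝ) (C : ℝ)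
    (H : (Fin n₁ → ℝ) × (Fin n₂ → ℝ) × (Fin n₁ → ℝ) → EReal)
    (hmeas : Measurable H)
    (hlow : ∀ (x : Fin n₁ → ℝ) (z : Fin n₂ → ℝ) (y : Fin n₁ → ℝ),
      ((c * ((∑ i, x i ^ 2) + (∑ j, z j ^ 2) + (∑ i, y i ^ 2))
          + ((∑ i, w₁ i * x i) + (∑ j, w₂ j * z j) + (∑ i, w₃ i * y i)) + C : ℝ) : EReal)
        ≤ H (x, z, y)) :
    (∀ (x y : Fin n₁ → ℝ),
      (∫⁻ z, ENNReal.ofReal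
          (if H (x, z, y) = ⊤ then 0 else Real.exp (-(H (x, z, y)).toReal)) ∂volume) < ⊤) ∧
    (∫⁻ q : (Fin n₁ → ℝ) × (Fin n₁ → ℝ),
        (∫⁻ z, ENNReal.ofReal
          (if H (q.1, z, q.2) = ⊤ then 0 else Real.exp (-(H (q.1, z, q.2)).toReal))
          ∂volume) ^ 2 ∂volume) < ⊤ := by
  have hbot (x z y) : H (x, z, y) ≠ ⊥ := ne_bot_of_le_ne_bot (EReal.coe_ne_bot _) (hlow x z y)
  obtain ⟨hfin, hL2⟩ := statement13_general hc w₁ w₂ w₃ C hmeas hlow 2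
  have hsq := lintegral_rpow_enorm_lt_top_of_eLpNorm_lt_top two_ne_zero ENNReal.ofNat_ne_top hL2.2
  simp only [ofReal_ite_exp_neg_toReal (hbot _ _ _)]
  exact ⟨fun x y ↦ hfin (x, y), by simpa [expNegKernel] using hsq⟩

end
end

section
/- Let H be a real Hilbert space, K and K̃ bounded linear operators on H, λ > 0, and P the rank-one operator Pf = ⟨φ_l, f⟩ φ_r for vectors φ_l, φ_r ∈ H with ⟨φ_l, φ_r⟩ = 1. Assume KP = PK = λP and that there exist a ∈ (0,1) and C₀ with ‖K^n − λ^n P‖ ≤ C₀ a^n λ^n for all n ∈ ℕ. Let (ψ_l^m)_{m∈ℕ} and (ψ_r^m)_{m∈ℕ} be sequences of unit vectors such that inf_{l,m,m'∈ℕ} ⟨ψ_l^m, (λ^{−1}K)^l ψ_r^{m'}⟩ > 0 and inf_{m,m'∈ℕ} ⟨ψ_l^m, φ_r⟩⟨φ_l, ψ_r^{m'}⟩ > 0. Then for all m, n, m', n' ∈ ℕ one has ⟨ψ_l^m, K^n K̃ K^{n'} ψ_r^{m'}⟩ / ⟨ψ_l^m, K^{n+n'+1} ψ_r^{m'}⟩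 = ⟨φ_l, K̃ φ_r⟩ / λ + R_{m,n,m',n'}, where the remainders satisfy sup_{m,n,m',n'∈ℕ} |R_{m,n,m',n'}| / a^{min{n,n'}} < ∞. -/
open scoped RealInnerProductSpace

noncomputable section

/-!
Normalise to `T = λ⁻¹K`, so that `‖T^n - P‖ ≤ C₀ a^n`. Since `P` has rank one, `P K̃ P = c P` with
`c = ⟨φ_l, K̃ φ_r⟩`, and therefore

  `T^n K̃ T^n' - c T^(n+n'+1) = (T^n - P) K̃ T^n' + P K̃ (T^n' - P) - c (T^(n+n'+1) - P)`,

where each term on the right is `O(a^min(n,n'))` in operator norm. Testing against `ψ_l` and `ψ_r`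
and dividing by `⟨ψ_l, T^(n+n'+1) ψ_r⟩`, which is bounded away from zero, gives the claim.
-/

section NormedAlgebra

variable {𝕜 A : Type*} [NormedField 𝕜] [SeminormedRing A] [NormedAlgebra 𝕜 A]

theorem norm_mul_mul_sub_smul_le {p b x y z : A} {c : 𝕜} {ε : ℝ} (hpbp : p * b * p = c • p)
    (hx : ‖x - p‖ ≤ ε) (hy : ‖y - p‖ ≤ ε) (hz : ‖z - p‖ ≤ ε) :
    ‖x * b * y - c • z‖ ≤ (‖b‖ * (‖p‖ + ‖y‖) + ‖c‖) * ε := by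
  have split : x * b * y - c • z = (x - p) * b * y + p * b * (y - p) - c • (z - p) := by
    rw [smul_sub, ← hpbp]
    noncomm_ring
  calc ‖x * b * y - c • z‖
      ≤ ‖(x - p) * b * y‖ + ‖p * b * (y - p)‖ + ‖c • (z - p)‖ := by
        rw [split]
        exact (norm_sub_le _ _).trans (by gcongr; exact norm_add_le _ _)
    _ ≤ ‖x - p‖ * ‖b‖ * ‖y‖ + ‖p‖ * ‖b‖ * ‖y - p‖ + ‖c‖ * ‖z - p‖ := by
        rw [norm_smul]
        gcongr <;> exact norm_mul₃_le
    _ ≤ ε * ‖b‖ * ‖y‖ + ‖p‖ * ‖b‖ * ε + ‖c‖ * ε := by gcongr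
    _ = (‖b‖ * (‖p‖ + ‖y‖) + ‖c‖) * ε := by ring

theorem norm_mul_mul_sub_smul_le_of_geometric {u : ℕ → A} {p b : A} {c : 𝕜} {a C : ℝ}
    (ha0 : 0 ≤ a) (ha1 : a ≤ 1) (hpbp : p * b * p = c • p)
    (hu : ∀ n, ‖u n - p‖ ≤ C * a ^ n) {m n k : ℕ} (hk : min m n ≤ k) :
    ‖u m * b * u n - c • u k‖ ≤ (‖b‖ * (2 * ‖p‖ + C) + ‖c‖) * C * a ^ min m n := by
  have hC : 0 ≤ C := by simpa using (norm_nonneg _).trans (hu 0)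
  have hu_of_le {i j : ℕ} (hij : i ≤ j) : ‖u j - p‖ ≤ C * a ^ i :=
    (hu j).trans (by gcongr ?_ * ?_; exact pow_le_pow_of_le_one ha0 ha1 hij)
  have hu_bounded : ‖u n‖ ≤ ‖p‖ + C :=
    (norm_le_norm_add_norm_sub' _ _).trans (by gcongr; simpa using hu_of_le n.zero_le)
  calc ‖u m * b * u n - c • u k‖
      ≤ (‖b‖ * (‖p‖ + ‖u n‖) + ‖c‖) * (C * a ^ min m n) :=
        norm_mul_mul_sub_smul_le hpbp (hu_of_le (min_le_left m n)) (hu_of_le (min_le_right m n))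
          (hu_of_le hk)
    _ ≤ (‖b‖ * (‖p‖ + (‖p‖ + C)) + ‖c‖) * (C * a ^ min m n) := by gcongr
    _ = (‖b‖ * (2 * ‖p‖ + C) + ‖c‖) * C * a ^ min m n := by ring

theorem norm_inv_smul_pow_sub_le {k p : A} {r : 𝕜} (hr : r ≠ 0) {n : ℕ} {ε : ℝ}
    (h : ‖k ^ n - r ^ n • p‖ ≤ ε * ‖r‖ ^ n) : ‖(r⁻¹ • k) ^ n - p‖ ≤ ε := by
  have hrn : r ^ n ≠ 0 := pow_ne_zero n hr
  have rescale : (r⁻¹ • k) ^ n - p = (r ^ n)⁻¹ • (k ^ n - r ^ n • p) := by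
    rw [smul_sub, inv_smul_smul₀ hrn, smul_pow, inv_pow]
  rw [rescale, norm_smul, norm_inv, norm_pow]
  exact (inv_mul_le_iff₀ (by positivity)).2 (h.trans_eq (mul_comm _ _))

end NormedAlgebra

theorem norm_div_sub_le {𝕜 : Type*} [NormedField 𝕜] {x y c : 𝕜} {δ ε : ℝ} (hδ : 0 < δ)
    (hy : δ ≤ ‖y‖) (h : ‖x - c * y‖ ≤ ε) : ‖x / y - c‖ ≤ ε / δ := by
  have hy0 : y ≠ 0 := norm_pos_iff.mp (hδ.trans_le hy)
  rw [div_sub' hy0, mul_comm y c, norm_div]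
  exact div_le_div₀ ((norm_nonneg _).trans h) h hδ hy

theorem mul_mul_eq_smul_of_rank_one {R M : Type*} [CommSemiring R] [AddCommMonoid M]
    [TopologicalSpace M] [Module R M] [ContinuousConstSMul R M] {P : M →L[R] M} {φl : M → R}
    {φr : M} (hP : ∀ f, P f = φl f • φr) (B : M →L[R] M) : P * B * P = φl (B φr) • P := by
  ext f
  simp [hP, smul_smul, mul_comm]

theorem apply_pow_div_apply_pow_eq {𝕜 M : Type*} [Field 𝕜] [TopologicalSpace 𝕜]
    [AddCommGroup M] [TopologicalSpace M] [IsTopologicalAddGroup M] [Module 𝕜 M]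
    [ContinuousConstSMul 𝕜 M]
    (K B : M →L[𝕜] M) {r : 𝕜} (hr : r ≠ 0) (ψ : StrongDual 𝕜 M) (x : M) (n n' : ℕ) :
    ψ ((K ^ n) (B ((K ^ n') x))) / ψ ((K ^ (n + n' + 1)) x) =
      ψ (((r⁻¹ • K) ^ n) (B (((r⁻¹ • K) ^ n') x))) / ψ (((r⁻¹ • K) ^ (n + n' + 1)) x) / r := by
  simp only [smul_pow, inv_pow, smul_apply, map_smul, smul_eq_mul]
  field_simp
  ring

section NormedSpace

variable {𝕜 E : Type*} [NontriviallyNormedField 𝕜] [SeminormedAddCommGroup E] [NormedSpace 𝕜 E]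

theorem norm_apply_le_of_norm_le_one {T : E →L[𝕜] E} {ψ : StrongDual 𝕜 E} {x : E}
    (hψ : ‖ψ‖ ≤ 1) (hx : ‖x‖ ≤ 1) : ‖ψ (T x)‖ ≤ ‖T‖ :=
  (ψ.le_of_opNorm_le hψ _).trans (by simpa using T.unit_le_opNorm x hx)

theorem statement14_general {ι ι' : Type*} (K Kt : E →L[𝕜] E) {lam : 𝕜} (hlam : lam ≠ 0)
    {φl : StrongDual 𝕜 E} {φr : E} {P : E →L[𝕜] E} (hP : ∀ f, P f = φl f • φr)
    {a C₀ : ℝ} (ha0 : 0 ≤ a) (ha1 : a ≤ 1)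
    (hdecay : ∀ n : ℕ, ‖K ^ n - lam ^ n • P‖ ≤ C₀ * a ^ n * ‖lam‖ ^ n)
    {ψl : ι → StrongDual 𝕜 E} {ψr : ι' → E} (hψl : ∀ m, ‖ψl m‖ ≤ 1) (hψr : ∀ m, ‖ψr m‖ ≤ 1)
    (hpos : ∃ δ : ℝ, 0 < δ ∧ ∀ l m m', δ ≤ ‖ψl m (((lam⁻¹ • K) ^ l) (ψr m'))‖) :
    ∃ R : ι → ℕ → ι' → ℕ → 𝕜,
      (∀ m n m' n', ψl m ((K ^ n) (Kt ((K ^ n') (ψr m')))) / ψl m ((K ^ (n + n' + 1)) (ψr m')) =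
        φl (Kt φr) / lam + R m n m' n') ∧
      ∃ M : ℝ, ∀ m n m' n', ‖R m n m' n'‖ ≤ M * a ^ min n n' := by
  obtain ⟨δ, hδ, hψ⟩ := hpos
  set T := lam⁻¹ • K
  set c := φl (Kt φr)
  have hT (n : ℕ) : ‖T ^ n - P‖ ≤ C₀ * a ^ n := norm_inv_smul_pow_sub_le hlam (hdecay n)
  set B := (‖Kt‖ * (2 * ‖P‖ + C₀) + ‖c‖) * C₀
  have hop (n n' : ℕ) : ‖T ^ n * Kt * T ^ n' - c • T ^ (n + n' + 1)‖ ≤ B * a ^ min n n' :=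
    norm_mul_mul_sub_smul_le_of_geometric ha0 ha1 (mul_mul_eq_smul_of_rank_one hP Kt) hT (by omega)
  refine ⟨_, fun m n m' n' => (add_sub_cancel _ _).symm, B / δ / ‖lam‖, fun m n m' n' => ?_⟩
  have hnum : ‖ψl m ((T ^ n) (Kt ((T ^ n') (ψr m')))) - c * ψl m ((T ^ (n + n' + 1)) (ψr m'))‖ ≤
      B * a ^ min n n' := by
    simpa using (norm_apply_le_of_norm_le_one (hψl m) (hψr m')).trans (hop n n')
  rw [apply_pow_div_apply_pow_eq K Kt hlam, ← sub_div, norm_div, div_mul_eq_mul_div,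
    div_mul_eq_mul_div]
  gcongr
  exact norm_div_sub_le hδ (hψ _ m m') hnum

end NormedSpace

/-- transfer-operator ratio formula with exponentially small remainder.
Given a bounded operator `K` on a real Hilbert space with a rank-one spectral projection `P`
at the top eigenvalue `λ` satisfying `‖Kⁿ − λⁿP‖ = O(aⁿλⁿ)`, and sequences of unit vectors
`ψ_l^m, ψ_r^m` with the stated uniform positivity properties, the ratios
`⟨ψ_l^m, Kⁿ K̃ K^{n'} ψ_r^{m'}⟩ / ⟨ψ_l^m, K^{n+n'+1} ψ_r^{m'}⟩` equal
`⟨φ_l, K̃ φ_r⟩/λ` up to a remainder which is `O(a^{min(n,n')})` uniformly. -/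
theorem statement14 {H : Type*} [NormedAddCommGroup H] [InnerProductSpace ℝ H]
    [CompleteSpace H]
    (K Kt : H →L[ℝ] H) (lam : ℝ) (hlam : 0 < lam)
    (φl φr : H) (hnorm : ⟪φl, φr⟫ = (1:ℝ))
    (P : H →L[ℝ] H) (hP : ∀ f, P f = ⟪φl, f⟫ • φr)
    (hKP : K ∘L P = lam • P) (hPK : P ∘L K = lam • P)
    (a : ℝ) (ha0 : 0 < a) (ha1 : a < 1) (C₀ : ℝ)
    (hdecay : ∀ n : ℕ, ‖K ^ n - lam ^ n • P‖ ≤ C₀ * a ^ n * lam ^ n)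
    (ψl ψr : ℕ → H)
    (hψl : ∀ m, ‖ψl m‖ = 1) (hψr : ∀ m, ‖ψr m‖ = 1)
    (hpos1 : ∃ δ : ℝ, 0 < δ ∧ ∀ (l m m' : ℕ), δ ≤ ⟪ψl m, ((lam⁻¹ • K) ^ l) (ψr m')⟫)
    (hpos2 : ∃ δ : ℝ, 0 < δ ∧ ∀ (m m' : ℕ), δ ≤ ⟪ψl m, φr⟫ * ⟪φl, ψr m'⟫) :
    ∃ R : ℕ → ℕ → ℕ → ℕ → ℝ,
      (∀ m n m' n' : ℕ,
        ⟪ψl m, (K ^ n) (Kt ((K ^ n') (ψr m')))⟫ / ⟪ψl m, (K ^ (n + n' + 1)) (ψr m')⟫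
          = ⟪φl, Kt φr⟫ / lam + R m n m' n') ∧
      ∃ M : ℝ, ∀ m n m' n' : ℕ, |R m n m' n'| ≤ M * a ^ (min n n') := by
  obtain ⟨δ, hδ, hψ⟩ := hpos1
  exact statement14_general (φl := innerSL ℝ φl) (ψl := fun m => innerSL ℝ (ψl m)) K Kt hlam.ne' hP
    ha0.le ha1.le (by simpa only [Real.norm_of_nonneg hlam.le] using hdecay)
    (fun m => by simp [hψl]) (fun m => (hψr m).le)
    ⟨δ, hδ, fun l m m' => (hψ l m m').trans (le_abs_self _)⟩

end
end

section
/- The spectral radius satisfies λ = r(K) ≥ ε μ(S) > 0; moreover λ ∈ σ(K), and there exist functions Φ_r, Φ_l ∈ L²(Ω, μ; ℂ), each μ-a.e. strictly positive, with K Φ_r = λ Φ_r and K* Φ_l = λ Φ_l. -/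
open MeasureTheory
open scoped ENNReal

noncomputable section

/-- Iterated integral kernels: `iterKernel μ k n` is the kernel `k_{n+1}` of the paper,
with `iterKernel μ k 0 = k₁ = k` and
`k_{N+1}(x,y) = ∫ k_N(x,z) k(z,y) dμ(z)`. -/
def iterKernel {Ω : Type*} [MeasurableSpace Ω] (μ : Measure Ω) (k : Ω → Ω → ℝ) :
    ℕ → Ω → Ω → ℝ
  | 0 => k
  | n + 1 => fun x y => ∫ z, iterKernel μ k n x z * k z y ∂μ

/-!
An order-theoretic Krein–Rutman argument. For `t > r(K)` the powers of `t⁻¹ K` tend to zero, so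
`K x ≤ t x` implies `0 ≤ x`; applied to `x = -χ`, where `χ` is the indicator function of
`S`, this gives `r(K) ≥ ε μ(S)`, since `K χ ≥ ε μ(S) χ`.

`K` is a Hilbert–Schmidt operator, hence compact, and as `r = r(K) > 0` it has an eigenfunction `f`
whose eigenvalue has modulus `r`. Then `h = |f|` satisfies `K h ≥ r h`, and `u_t = (t - K)⁻¹ h`
satisfies `u_t ≥ 0` and `(t - r) u_t ≥ h`. So `‖u_t‖ → ∞` along some `t ↓ r`, which makes the
normalized `u_t` approximate eigenvectors for `r`; compactness produces an eigenfunction `Φ ≥ 0`.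
Since `k` must vanish on `{Φ = 0} × {Φ ≠ 0}`, irreducibility makes `{Φ = 0}` a null set. Finally,
`K*` has the transposed kernel and the same spectral radius.
-/

open Filter Topology
open scoped ComplexOrder NNReal

section SpectralRadius

lemma spectralRadius_ne_top {𝕜 A : Type*} [NontriviallyNormedField 𝕜] [NormedRing A]
    [NormedAlgebra 𝕜 A] [CompleteSpace A] (a : A) : spectralRadius 𝕜 a ≠ ∞ := by
  refine ne_top_of_le_ne_top ?_ (spectrum.spectralRadius_le_pow_nnnorm_pow_one_div 𝕜 a 0)
  simp [ENNReal.mul_ne_top]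

lemma spectralRadius_star {A : Type*} [CStarAlgebra A] (a : A) :
    spectralRadius ℂ (star a) = spectralRadius ℂ a := by
  refine tendsto_nhds_unique (spectrum.pow_nnnorm_pow_one_div_tendsto_nhds_spectralRadius _) ?_
  simpa [← star_pow] using spectrum.pow_nnnorm_pow_one_div_tendsto_nhds_spectralRadius a

variable {A : Type*} [NormedRing A] [NormedAlgebra ℂ A] [CompleteSpace A]

lemma eventually_norm_pow_le_of_spectralRadius_lt {a : A} {q : ℝ≥0}
    (h : spectralRadius ℂ a < q) : ∀ᶠ n : ℕ in atTop, ‖a ^ n‖ ≤ q ^ n := by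
  have hlim := spectrum.pow_nnnorm_pow_one_div_tendsto_nhds_spectralRadius a
  filter_upwards [hlim.eventually_lt_const h, eventually_gt_atTop 0] with n hn hn0
  have hpow := ENNReal.rpow_le_rpow hn.le (z := (n : ℝ)) (by positivity)
  rw [← ENNReal.rpow_mul, one_div_mul_cancel (by positivity), ENNReal.rpow_one,
    ENNReal.rpow_natCast] at hpow
  exact_mod_cast hpow

lemma tendsto_inv_smul_pow_of_spectralRadius_lt {a : A} {t : ℝ}
    (h : spectralRadius ℂ a < ENNReal.ofReal t) :
    Tendsto (fun n : ℕ => ((t : ℂ)⁻¹ • a) ^ n) atTop (𝓝 0) := by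
  have ht : 0 < t := ENNReal.ofReal_pos.1 (zero_le.trans_lt h)
  obtain ⟨q, haq, hqt⟩ := ENNReal.lt_iff_exists_nnreal_btwn.1 h
  have hqt : (q : ℝ) / t < 1 := by
    rw [div_lt_one ht]
    exact (ENNReal.ofReal_lt_ofReal_iff ht).1 (by rwa [ENNReal.ofReal_coe_nnreal])
  refine squeeze_zero_norm' ?_ (tendsto_pow_atTop_nhds_zero_of_lt_one (by positivity) hqt)
  filter_upwards [eventually_norm_pow_le_of_spectralRadius_lt haq] with n hn
  rw [smul_pow, norm_smul, norm_pow, norm_inv, Complex.norm_of_nonneg ht.le, div_pow, inv_pow,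
    div_eq_inv_mul]
  gcongr

end SpectralRadius

section CompactOperator

lemma exists_smul_sub_map_eq {𝕜 E : Type*} [NontriviallyNormedField 𝕜] [NormedAddCommGroup E]
    [NormedSpace 𝕜 E] {T : E →L[𝕜] E} {z : 𝕜} (hz : spectralRadius 𝕜 T < ‖z‖₊) (y : E) :
    ∃ x, z • x - T x = y := by
  obtain ⟨S, hS⟩ := spectrum.mem_resolventSet_of_spectralRadius_lt hz
  refine ⟨S⁻¹.val y, ?_⟩
  have hSy : (S : E →L[𝕜] E) (S⁻¹.val y) = y := DFunLike.congr_fun S.mul_inv y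
  rwa [hS, Algebra.algebraMap_eq_smul_one] at hSy

lemma exists_eigenvector_enorm_eq_spectralRadius {E : Type*} [NormedAddCommGroup E]
    [NormedSpace ℂ E] [CompleteSpace E] {T : E →L[ℂ] E} (hT : IsCompactOperator T)
    (hr : 0 < spectralRadius ℂ T) :
    ∃ (z : ℂ) (f : E), f ≠ 0 ∧ T f = z • f ∧ ‖z‖ₑ = spectralRadius ℂ T := by
  cases subsingleton_or_nontrivial E with
  | inl _ => simp [spectrum.SpectralRadius.of_subsingleton] at hr
  | inr _ =>
    obtain ⟨z, hz, hzr⟩ := spectrum.exists_nnnorm_eq_spectralRadius T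
    have hz0 : z ≠ 0 := by
      rintro rfl
      simp [← hzr] at hr
    obtain ⟨f, hf⟩ := ((hT.hasEigenvalue_iff_mem_spectrum hz0).2 hz).exists_hasEigenvector
    exact ⟨z, f, hf.2, hf.apply_eq_smul, hzr⟩

lemma exists_eigenvector_of_isCompactOperator_of_tendsto {𝕜 E : Type*} [NontriviallyNormedField 𝕜]
    [NormedAddCommGroup E] [NormedSpace 𝕜 E] {T : E →L[𝕜] E} (hT : IsCompactOperator T) {c : 𝕜}
    (hc : c ≠ 0) {C : Set E} (hC : IsClosed C) {v : ℕ → E} (hvC : ∀ n, v n ∈ C)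
    (hv : ∀ n, ‖v n‖ = 1) (hlim : Tendsto (fun n => T (v n) - c • v n) atTop (𝓝 0)) :
    ∃ u ∈ C, ‖u‖ = 1 ∧ T u = c • u := by
  obtain ⟨Q, hQ, hTQ⟩ := hT.image_closedBall_subset_compact 1
  obtain ⟨y, -, φ, hφ, hy⟩ := hQ.tendsto_subseq (x := fun n => T (v n)) fun n =>
    hTQ ⟨v n, by simp [hv n], rfl⟩
  have hu : Tendsto (v ∘ φ) atTop (𝓝 (c⁻¹ • y)) := by
    have := (hy.sub (hlim.comp hφ.tendsto_atTop)).const_smul c⁻¹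
    simpa [Function.comp_def, inv_smul_smul₀ hc] using this
  refine ⟨c⁻¹ • y, hC.mem_of_tendsto hu (Eventually.of_forall fun n => hvC _),
    tendsto_nhds_unique hu.norm (by simp [hv]), ?_⟩
  rw [smul_inv_smul₀ hc]
  exact tendsto_nhds_unique ((T.continuous.tendsto _).comp hu) hy

end CompactOperator

section OrderedSpace

variable {E : Type*} [NormedAddCommGroup E] [NormedSpace ℂ E] [CompleteSpace E]
  [PartialOrder E] [PosSMulMono ℂ E] [OrderClosedTopology E] {T : E →L[ℂ] E} {h x : E}

lemma nonneg_of_map_le_smul {t : ℝ} (hT : Monotone T)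
    (ht : spectralRadius ℂ T < ENNReal.ofReal t) (hx : T x ≤ (t : ℂ) • x) : 0 ≤ x := by
  have ht0 : 0 < t := ENNReal.ofReal_pos.1 (zero_le.trans_lt ht)
  have ht0' : (0 : ℂ) < t := by exact_mod_cast ht0
  set R : E →L[ℂ] E := (t : ℂ)⁻¹ • T
  have hR : Monotone R := fun y z hyz => smul_le_smul_of_nonneg_left (hT hyz) (inv_pos.2 ht0').le
  have hRx : R x ≤ x := by
    calc R x ≤ (t : ℂ)⁻¹ • (t : ℂ) • x := smul_le_smul_of_nonneg_left hx (inv_pos.2 ht0').le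
      _ = x := inv_smul_smul₀ ht0'.ne' x
  have hlim : Tendsto (fun n => (R ^ n) x) atTop (𝓝 0) := by
    simpa only [Function.comp_def, map_zero, ContinuousLinearMap.apply_apply] using
      ((ContinuousLinearMap.apply ℂ E x).continuous.tendsto 0).comp
        (tendsto_inv_smul_pow_of_spectralRadius_lt ht)
  refine le_of_tendsto' hlim fun n => ?_
  rw [FunLike.coe_pow_eq_iterate]
  exact hR.antitone_iterate_of_map_le hRx n.zero_le

variable [IsOrderedAddMonoid E]

lemma ofReal_le_spectralRadius_of_smul_le_map {c : ℝ} (hT : Monotone T) (hh : 0 ≤ h)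
    (hh0 : h ≠ 0) (hc : (c : ℂ) • h ≤ T h) : ENNReal.ofReal c ≤ spectralRadius ℂ T := by
  by_contra! hlt
  have hneg : 0 ≤ -h := nonneg_of_map_le_smul hT hlt (by simpa using hc)
  exact hh0 (le_antisymm (neg_nonneg.1 hneg) hh)

lemma exists_nonneg_map_eq_smul_sub {r t : ℝ} (hT : Monotone T)
    (ht : spectralRadius ℂ T < ENNReal.ofReal t) (hh : 0 ≤ h)
    (hrh : (r : ℂ) • h ≤ T h) :
    ∃ u, 0 ≤ u ∧ T u = (t : ℂ) • u - h ∧ h ≤ ((t - r : ℝ) : ℂ) • u := by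
  have ht0 : 0 ≤ t := (ENNReal.ofReal_pos.1 (zero_le.trans_lt ht)).le
  obtain ⟨u, hu⟩ := exists_smul_sub_map_eq (T := T) (z := t)
    (by rwa [← enorm_eq_nnnorm, ← ofReal_norm, Complex.norm_of_nonneg ht0]) h
  have hTu : T u = (t : ℂ) • u - h := by rw [← hu, sub_sub_cancel]
  refine ⟨u, nonneg_of_map_le_smul hT ht (by rw [hTu]; exact sub_le_self _ hh), hTu,
    sub_nonneg.1 (nonneg_of_map_le_smul hT ht ?_)⟩
  calc T (((t - r : ℝ) : ℂ) • u - h) = ((t - r : ℝ) : ℂ) • ((t : ℂ) • u - h) - T h := by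
        rw [map_sub, map_smul, hTu]
    _ ≤ ((t - r : ℝ) : ℂ) • ((t : ℂ) • u - h) - (r : ℂ) • h := sub_le_sub_left hrh _
    _ = (t : ℂ) • (((t - r : ℝ) : ℂ) • u - h) := by push_cast; module

lemma exists_nonneg_norm_map_sub_smul_lt {r η : ℝ} (hT : Monotone T) (hr : 0 ≤ r)
    (hTr : spectralRadius ℂ T ≤ ENNReal.ofReal r) (hh : 0 ≤ h) (hh0 : h ≠ 0)
    (hrh : (r : ℂ) • h ≤ T h) (hη : 0 < η) :
    ∃ u, 0 ≤ u ∧ ‖T u - (r : ℂ) • u‖ < η * ‖u‖ := by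
  have hres : ∀ t > r, ∃ u, 0 ≤ u ∧ T u = (t : ℂ) • u - h ∧ h ≤ ((t - r : ℝ) : ℂ) • u :=
    fun t hrt => exists_nonneg_map_eq_smul_sub hT
      (hTr.trans_lt ((ENNReal.ofReal_lt_ofReal_iff (hr.trans_lt hrt)).2 hrt)) hh hrh
  choose! u hu0 hTu hhu using hres
  suffices ∃ t > r, t - r < η / 2 ∧ ‖h‖ < η / 2 * ‖u t‖ by
    obtain ⟨t, hrt, htη, hhuη⟩ := this
    refine ⟨u t, hu0 t hrt, ?_⟩
    calc ‖T (u t) - (r : ℂ) • u t‖ = ‖((t - r : ℝ) : ℂ) • u t - h‖ := by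
          rw [hTu t hrt]; push_cast; congr 1; module
      _ ≤ (t - r) * ‖u t‖ + ‖h‖ := by
          grw [norm_sub_le, norm_smul, Complex.norm_of_nonneg (by linarith)]
      _ < η / 2 * ‖u t‖ + η / 2 * ‖u t‖ := add_lt_add_of_le_of_lt (by gcongr) hhuη
      _ = η * ‖u t‖ := by ring
  -- Otherwise `u` is bounded as `t ↓ r`, and `h ≤ (t - r) • u t` degenerates to `h ≤ 0`.
  by_contra! hbdd
  have hlim : Tendsto (fun t => ((t - r : ℝ) : ℂ) • u t) (𝓝[>] r) (𝓝 0) := by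
    have hzero : Tendsto (fun t : ℝ => t - r) (𝓝[>] r) (𝓝 0) :=
      (Continuous.tendsto' (f := (· - r)) (by fun_prop) r 0 (sub_self r)).mono_left
        nhdsWithin_le_nhds
    refine squeeze_zero_norm' ?_ (by simpa using hzero.mul_const (2 / η * ‖h‖))
    filter_upwards [self_mem_nhdsWithin, hzero.eventually_lt_const (half_pos hη)] with t hrt htη
    have hut : ‖u t‖ ≤ 2 / η * ‖h‖ := by
      have := hbdd t hrt htη
      field_simp at this ⊢
      linarith
    rw [norm_smul, Complex.norm_of_nonneg (sub_nonneg.2 (le_of_lt hrt))]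
    exact mul_le_mul_of_nonneg_left hut (sub_nonneg.2 (le_of_lt hrt))
  exact hh0 ((ge_of_tendsto hlim (eventually_nhdsWithin_of_forall hhu)).antisymm hh)

lemma exists_nonneg_eigenvector {r : ℝ} (hTc : IsCompactOperator T) (hT : Monotone T) (hr : 0 < r)
    (hTr : spectralRadius ℂ T ≤ ENNReal.ofReal r) (hh : 0 ≤ h) (hh0 : h ≠ 0)
    (hrh : (r : ℂ) • h ≤ T h) : ∃ u, 0 ≤ u ∧ u ≠ 0 ∧ T u = (r : ℂ) • u := by
  have happrox : ∀ n : ℕ, ∃ v, 0 ≤ v ∧ ‖v‖ = 1 ∧ ‖T v - (r : ℂ) • v‖ ≤ 1 / (n + 1) := by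
    intro n
    obtain ⟨w, hw, hTw⟩ := exists_nonneg_norm_map_sub_smul_lt hT hr.le hTr hh hh0 hrh
      (η := 1 / (n + 1)) (by positivity)
    have hw0 : 0 < ‖w‖ := pos_of_mul_pos_right ((norm_nonneg _).trans_lt hTw) (by positivity)
    refine ⟨(‖w‖⁻¹ : ℂ) • w, smul_nonneg (by simp) hw,
      norm_smul_inv_norm (norm_pos_iff.1 hw0), ?_⟩
    rw [map_smul, smul_comm, ← smul_sub, norm_smul, norm_inv, Complex.norm_real, norm_norm,
      inv_mul_le_iff₀ hw0, mul_comm]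
    exact hTw.le
  choose v hv hv1 hTv using happrox
  obtain ⟨u, hu, hu1, hTu⟩ := exists_eigenvector_of_isCompactOperator_of_tendsto hTc (c := (r : ℂ))
    (by exact_mod_cast hr.ne') isClosed_Ici hv hv1
    (squeeze_zero_norm hTv tendsto_one_div_add_atTop_nhds_zero_nat)
  exact ⟨u, hu, norm_ne_zero_iff.1 (hu1 ▸ one_ne_zero), hTu⟩

end OrderedSpace

section HilbertSchmidt

open InnerProductSpace

variable {𝕜 ι H F : Type*} [RCLike 𝕜] [NormedAddCommGroup H] [InnerProductSpace 𝕜 H]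
  [NormedAddCommGroup F] [NormedSpace 𝕜 F]

lemma isCompactOperator_rankOne (x : F) (y : H) : IsCompactOperator (rankOne 𝕜 x y) := by
  rw [rankOne_def']
  exact (isCompactOperator_of_locallyCompactSpace_dom (innerSL 𝕜 y)).clm_comp
    (ContinuousLinearMap.toSpanSingleton 𝕜 x)

lemma norm_sum_rankOne_le {b : ι → H} (hb : Orthonormal 𝕜 b) (v : ι → F) (s : Finset ι) :
    ‖∑ i ∈ s, rankOne 𝕜 (v i) (b i)‖ ≤ √(∑ i ∈ s, ‖v i‖ ^ 2) := by
  refine ContinuousLinearMap.opNorm_le_bound _ (by positivity) fun f => ?_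
  calc ‖(∑ i ∈ s, rankOne 𝕜 (v i) (b i)) f‖ ≤ ∑ i ∈ s, ‖v i‖ * ‖inner 𝕜 (b i) f‖ := by
        rw [sum_apply]
        refine (norm_sum_le _ _).trans_eq (Finset.sum_congr rfl fun i _ => ?_)
        rw [rankOne_apply, norm_smul, mul_comm]
    _ ≤ √(∑ i ∈ s, ‖v i‖ ^ 2) * √(∑ i ∈ s, ‖inner 𝕜 (b i) f‖ ^ 2) :=
        Real.sum_mul_le_sqrt_mul_sqrt _ _ _
    _ ≤ √(∑ i ∈ s, ‖v i‖ ^ 2) * ‖f‖ := by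
        gcongr
        exact Real.sqrt_le_iff.2 ⟨norm_nonneg _, hb.sum_inner_products_le f⟩

variable [CompleteSpace F]

lemma summable_rankOne {b : ι → H} (hb : Orthonormal 𝕜 b) {v : ι → F}
    (hv : Summable fun i => ‖v i‖ ^ 2) : Summable fun i => rankOne 𝕜 (v i) (b i) := by
  rw [summable_iff_vanishing_norm] at hv ⊢
  intro ε hε
  obtain ⟨s, hs⟩ := hv (ε ^ 2) (by positivity)
  refine ⟨s, fun t ht => (norm_sum_rankOne_le hb v t).trans_lt ?_⟩
  rw [Real.sqrt_lt' hε]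
  exact (le_abs_self _).trans_lt (hs t ht)

lemma hasSum_rankOne (b : HilbertBasis ι 𝕜 H) {T : H →L[𝕜] F}
    (hT : Summable fun i => ‖T (b i)‖ ^ 2) : HasSum (fun i => rankOne 𝕜 (T (b i)) (b i)) T := by
  have hsum := (summable_rankOne b.orthonormal hT).hasSum
  convert hsum
  ext f
  refine ((b.hasSum_repr f).mapL T).unique ?_
  simpa [b.repr_apply_apply] using hsum.mapL (ContinuousLinearMap.apply 𝕜 F f)

lemma isCompactOperator_of_summable_norm_sq (b : HilbertBasis ι 𝕜 H) {T : H →L[𝕜] F}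
    (hT : Summable fun i => ‖T (b i)‖ ^ 2) : IsCompactOperator T :=
  isCompactOperator_of_tendsto (hasSum_rankOne b hT) (Eventually.of_forall fun _ =>
    (compactOperator (RingHom.id 𝕜) H F).sum_mem fun i _ =>
      isCompactOperator_rankOne (T (b i)) (b i))

end HilbertSchmidt

section IntegralKernel

variable {𝕜 X Y : Type*} [RCLike 𝕜] [MeasurableSpace X] [MeasurableSpace Y]
  {μ : Measure X} {ν : Measure Y}

lemma norm_sq_eq_integral_norm_sq (f : Lp 𝕜 2 μ) : ‖f‖ ^ 2 = ∫ x, ‖f x‖ ^ 2 ∂μ := by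
  have h : ((‖f‖ ^ 2 : ℝ) : 𝕜) = ((∫ x, ‖f x‖ ^ 2 ∂μ : ℝ) : 𝕜) := by
    rw [← integral_ofReal, RCLike.ofReal_pow, ← inner_self_eq_norm_sq_to_K (𝕜 := 𝕜), L2.inner_def]
    simp_rw [inner_self_eq_norm_sq_to_K, RCLike.ofReal_pow]
  exact_mod_cast h

lemma integrable_norm_sq (f : Lp 𝕜 2 μ) : Integrable (fun x => ‖f x‖ ^ 2) μ :=
  (memLp_two_iff_integrable_sq_norm (Lp.aestronglyMeasurable f)).1 (Lp.memLp f)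

lemma ae_memLp_two_of_memLp_prod [SFinite μ] [SFinite ν] {F : X × Y → 𝕜}
    (hF : MemLp F 2 (μ.prod ν)) : ∀ᵐ x ∂μ, MemLp (fun y => F (x, y)) 2 ν := by
  filter_upwards [hF.1.prodMk_left,
    ((memLp_two_iff_integrable_sq_norm hF.1).1 hF).prod_right_ae] with x hmeas hint
  exact (memLp_two_iff_integrable_sq_norm hmeas).2 hint

lemma sum_norm_sq_integral_mul_le {ι : Type*} {b : ι → Lp 𝕜 2 ν} (hb : Orthonormal 𝕜 b)
    {g : Y → 𝕜} (hg : MemLp g 2 ν) (s : Finset ι) :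
    ∑ i ∈ s, ‖∫ y, g y * b i y ∂ν‖ ^ 2 ≤ ∫ y, ‖g y‖ ^ 2 ∂ν := by
  set G : Lp 𝕜 2 ν := hg.star.toLp
  have hG : G =ᵐ[ν] star g := hg.star.coeFn_toLp
  have hinner : ∀ i, inner 𝕜 G (b i) = ∫ y, g y * b i y ∂ν := fun i => by
    rw [L2.inner_def]
    refine integral_congr_ae (hG.mono fun y hy => ?_)
    simp [hy, mul_comm]
  calc ∑ i ∈ s, ‖∫ y, g y * b i y ∂ν‖ ^ 2 = ∑ i ∈ s, ‖inner 𝕜 (b i) G‖ ^ 2 := by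
        simp_rw [← hinner, norm_inner_symm]
    _ ≤ ‖G‖ ^ 2 := hb.sum_inner_products_le G
    _ = ∫ y, ‖g y‖ ^ 2 ∂ν := by
        rw [norm_sq_eq_integral_norm_sq]
        refine integral_congr_ae (hG.mono fun y hy => ?_)
        simp [hy]

/-- `K` is the integral operator with kernel `k`, that is, `K f x = ∫ k x y * f y dν` for almost
every `x`. -/
def HasIntegralKernel (K : Lp 𝕜 2 ν →L[𝕜] Lp 𝕜 2 μ) (k : X → Y → 𝕜) : Prop :=
  ∀ f : Lp 𝕜 2 ν, ∀ᵐ x ∂μ, K f x = ∫ y, k x y * f y ∂ν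

namespace HasIntegralKernel

variable {K : Lp 𝕜 2 ν →L[𝕜] Lp 𝕜 2 μ} {k : X → Y → 𝕜}

lemma sum_norm_sq_map_le [SFinite μ] [SFinite ν] (hK : HasIntegralKernel K k)
    (hk : MemLp (Function.uncurry k) 2 (μ.prod ν)) {ι : Type*} {b : ι → Lp 𝕜 2 ν}
    (hb : Orthonormal 𝕜 b) (s : Finset ι) :
    ∑ i ∈ s, ‖K (b i)‖ ^ 2 ≤ ∫ x, ∫ y, ‖k x y‖ ^ 2 ∂ν ∂μ := by
  have hsum : ∀ᵐ x ∂μ, ∑ i ∈ s, ‖K (b i) x‖ ^ 2 ≤ ∫ y, ‖k x y‖ ^ 2 ∂ν := by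
    filter_upwards [ae_memLp_two_of_memLp_prod hk,
      (ae_ball_iff s.countable_toSet).2 fun i _ => hK (b i)] with x hkx hKx
    rw [Finset.sum_congr rfl fun i hi => by rw [hKx i hi]]
    exact sum_norm_sq_integral_mul_le hb hkx s
  calc ∑ i ∈ s, ‖K (b i)‖ ^ 2 = ∫ x, ∑ i ∈ s, ‖K (b i) x‖ ^ 2 ∂μ := by
        rw [integral_finsetSum s fun i _ => integrable_norm_sq (K (b i))]
        simp_rw [norm_sq_eq_integral_norm_sq]
    _ ≤ ∫ x, ∫ y, ‖k x y‖ ^ 2 ∂ν ∂μ :=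
        integral_mono_ae (integrable_finsetSum s fun i _ => integrable_norm_sq (K (b i)))
          ((memLp_two_iff_integrable_sq_norm hk.1).1 hk).integral_prod_left hsum

theorem isCompactOperator [SFinite μ] [SFinite ν] (hK : HasIntegralKernel K k)
    (hk : MemLp (Function.uncurry k) 2 (μ.prod ν)) : IsCompactOperator K := by
  obtain ⟨_, b, -⟩ := exists_hilbertBasis 𝕜 (Lp 𝕜 2 ν)
  exact isCompactOperator_of_summable_norm_sq b (summable_of_sum_le (fun _ => sq_nonneg _)
    (hK.sum_norm_sq_map_le hk b.orthonormal))

lemma ae_map_indicatorConstLp_eq (hK : HasIntegralKernel K k) {s : Set Y} (hs : MeasurableSet s)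
    (hνs : ν s ≠ ∞) : ∀ᵐ x ∂μ, K (indicatorConstLp 2 hs hνs 1) x = ∫ y in s, k x y ∂ν := by
  filter_upwards [hK (indicatorConstLp 2 hs hνs 1)] with x hx
  rw [hx, ← integral_indicator hs]
  refine integral_congr_ae ?_
  filter_upwards [indicatorConstLp_coeFn (p := 2) (hs := hs) (hμs := hνs) (c := (1 : 𝕜))] with y hy
  simp only [hy, ← Set.indicator_mul_right, mul_one]

lemma integrable_conj_kernel_mul [SFinite ν]
    (hk : MemLp (Function.uncurry k) 2 (μ.prod ν)) (g : Lp 𝕜 2 μ) {s : Set Y} (hs : ν s ≠ ∞) :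
    Integrable (fun p : X × Y => star (k p.1 p.2) * g p.1) (μ.prod (ν.restrict s)) := by
  have := Fact.mk hs.lt_top
  have hks : MemLp (Function.uncurry k) 2 (μ.prod (ν.restrict s)) :=
    hk.mono_measure (Measure.prod_mono le_rfl Measure.restrict_le_self)
  exact hks.star.integrable_mul ((Lp.memLp g).comp_fst (ν.restrict s))

theorem adjoint [SFinite μ] [SigmaFinite ν] (hK : HasIntegralKernel K k)
    (hk : MemLp (Function.uncurry k) 2 (μ.prod ν)) :
    HasIntegralKernel K.adjoint fun y x => star (k x y) := by
  intro g
  refine ae_eq_of_forall_setIntegral_eq_of_sigmaFinite (fun s _ hs => ?_) (fun s _ hs => ?_)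
    fun s hs hνs => ?_
  · have := Fact.mk hs
    exact ((Lp.memLp (K.adjoint g)).restrict s).integrable one_le_two
  · exact (integrable_conj_kernel_mul hk g hs.ne).integral_prod_right
  rw [← L2.inner_indicatorConstLp_one hs hνs.ne, ContinuousLinearMap.adjoint_inner_right,
    L2.inner_def, ← integral_integral_swap (integrable_conj_kernel_mul hk g hνs.ne)]
  refine integral_congr_ae ?_
  filter_upwards [hK.ae_map_indicatorConstLp_eq hs hνs.ne] with x hx
  rw [hx, RCLike.inner_apply, ← integral_conj, integral_mul_const, mul_comm]
  simp only [starRingEnd_apply]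

end HasIntegralKernel
end IntegralKernel

section Irreducible

variable {X : Type*} [MeasurableSpace X] {μ : Measure X} {k : X → X → ℝ}

/-- A kernel is irreducible if it vanishes almost everywhere on `A ×ˢ Aᶜ` only for sets `A` that
are null or conull. -/
def IsIrreducibleKernel (μ : Measure X) (k : X → X → ℝ) : Prop :=
  ∀ A, MeasurableSet A → (∀ᵐ x ∂μ, ∀ᵐ y ∂μ, x ∈ A → y ∉ A → k x y = 0) → EventuallyConst A (ae μ)

lemma ae_ae_swap_of_vanishes [SFinite μ] (hk : Measurable (Function.uncurry k)) {A : Set X}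
    (hA : MeasurableSet A) (h : ∀ᵐ x ∂μ, ∀ᵐ y ∂μ, x ∈ A → y ∉ A → k x y = 0) :
    ∀ᵐ y ∂μ, ∀ᵐ x ∂μ, x ∈ A → y ∉ A → k x y = 0 := by
  refine (Measure.ae_ae_comm ?_).1 h
  exact (measurable_fst hA).imp ((measurable_snd hA).compl.imp (hk (measurableSet_singleton 0)))

lemma IsIrreducibleKernel.swap [SFinite μ] (hk : Measurable (Function.uncurry k))
    (h : IsIrreducibleKernel μ k) : IsIrreducibleKernel μ fun x y => k y x := by
  intro A hA hvan
  refine eventuallyConst_set.2 ?_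
  have hvan' : ∀ᵐ x ∂μ, ∀ᵐ y ∂μ, x ∈ Aᶜ → y ∉ Aᶜ → k x y = 0 := by
    filter_upwards [ae_ae_swap_of_vanishes (k := fun x y => k y x)
      (hk.comp measurable_swap) hA hvan] with x hx
    filter_upwards [hx] with y hxy hxA hyA
    exact hxy (not_not.1 hyA) hxA
  simpa [or_comm] using eventuallyConst_set.1 (h Aᶜ hA.compl hvan')

lemma ae_ae_iterKernel_eq_zero [SFinite μ] (hk : Measurable (Function.uncurry k)) {A : Set X}
    (hA : MeasurableSet A) (h : ∀ᵐ x ∂μ, ∀ᵐ y ∂μ, x ∈ A → y ∉ A → k x y = 0) (n : ℕ) :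
    ∀ᵐ x ∂μ, ∀ᵐ y ∂μ, x ∈ A → y ∉ A → iterKernel μ k n x y = 0 := by
  induction n with
  | zero => exact h
  | succ n ih =>
    filter_upwards [ih] with x hx
    filter_upwards [ae_ae_swap_of_vanishes hk hA h] with y hy hxA hyA
    refine integral_eq_zero_of_ae ?_
    filter_upwards [hx, hy] with z hxz hzy
    by_cases hzA : z ∈ A
    · simp [hzy hzA hyA]
    · simp [hxz hxA hzA]

lemma isIrreducibleKernel_of_iterKernel_pos [SFinite μ] (hk : Measurable (Function.uncurry k))
    {n : ℕ} (hpos : ∀ x y, 0 < iterKernel μ k n x y) : IsIrreducibleKernel μ k := by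
  intro A hA hvan
  refine eventuallyConst_set.2 (or_iff_not_imp_right.2 fun hnull => ?_)
  obtain ⟨x, hxA, hx⟩ := ((not_eventually.1 hnull).and_eventually
    (ae_ae_iterKernel_eq_zero hk hA hvan n)).exists
  filter_upwards [hx] with y hy
  by_contra hyA
  exact (hpos x y).ne' (hy (not_not.1 hxA) hyA)

end Irreducible

section Positivity

variable {X : Type*} [MeasurableSpace X] {μ : Measure X}

instance instPosSMulMonoLp {𝕜 E : Type*} [NormedRing 𝕜] [Preorder 𝕜] [NormedAddCommGroup E]
    [PartialOrder E] [Module 𝕜 E] [IsBoundedSMul 𝕜 E] [PosSMulMono 𝕜 E] {p : ℝ≥0∞} :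
    PosSMulMono 𝕜 (Lp E p μ) where
  smul_le_smul_of_nonneg_left c hc f g hfg := by
    rw [← Lp.coeFn_le] at hfg ⊢
    filter_upwards [hfg, Lp.coeFn_smul c f, Lp.coeFn_smul c g] with x hx hf hg
    rw [hf, hg]
    exact smul_le_smul_of_nonneg_left hx hc

/-- The pointwise modulus `|f|` of a complex `Lᵖ` function, again as a complex `Lᵖ` function. -/
def modulus {p : ℝ≥0∞} (f : Lp ℂ p μ) : Lp ℂ p μ := ((Lp.memLp f).norm.ofReal (K := ℂ)).toLp

lemma coeFn_modulus {p : ℝ≥0∞} (f : Lp ℂ p μ) : modulus f =ᵐ[μ] fun x => (‖f x‖ : ℂ) :=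
  MemLp.coeFn_toLp _

lemma modulus_nonneg {p : ℝ≥0∞} (f : Lp ℂ p μ) : 0 ≤ modulus f := by
  rw [← Lp.coeFn_nonneg]
  filter_upwards [coeFn_modulus f] with x hx
  rw [hx]
  exact Complex.zero_le_real.2 (norm_nonneg _)

lemma modulus_ne_zero {p : ℝ≥0∞} {f : Lp ℂ p μ} (hf : f ≠ 0) : modulus f ≠ 0 := by
  contrapose! hf
  rw [Lp.eq_zero_iff_ae_eq_zero] at hf ⊢
  filter_upwards [hf, coeFn_modulus f] with x h0 hx
  simpa [hx] using h0

variable {k : X → X → ℝ} {K : Lp ℂ 2 μ →L[ℂ] Lp ℂ 2 μ}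

namespace HasIntegralKernel

lemma monotone (hK : HasIntegralKernel K fun x y => (k x y : ℂ))
    (hk0 : ∀ᵐ x ∂μ, ∀ᵐ y ∂μ, 0 ≤ k x y) : Monotone K := by
  refine (monotone_iff_map_nonneg K).2 fun f hf => ?_
  rw [← Lp.coeFn_nonneg] at hf ⊢
  filter_upwards [hK f, hk0] with x hx hkx
  rw [hx]
  refine integral_nonneg_of_ae ?_
  filter_upwards [hkx, hf] with y hky hfy
  exact mul_nonneg (Complex.zero_le_real.2 hky) hfy

lemma norm_smul_modulus_le_map_modulus (hK : HasIntegralKernel K fun x y => (k x y : ℂ))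
    (hk0 : ∀ᵐ x ∂μ, ∀ᵐ y ∂μ, 0 ≤ k x y) {f : Lp ℂ 2 μ} {z : ℂ} (hf : K f = z • f) :
    (‖z‖ : ℂ) • modulus f ≤ K (modulus f) := by
  rw [← Lp.coeFn_le]
  filter_upwards [hK f, hK (modulus f), Lp.coeFn_smul (‖z‖ : ℂ) (modulus f), Lp.coeFn_smul z f,
    coeFn_modulus f, hk0] with x hKf hKm hsm hsf hm hkx
  have hnorm : ∀ᵐ y ∂μ, (k x y : ℂ) * modulus f y = (‖(k x y : ℂ) * f y‖ : ℝ) := by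
    filter_upwards [hkx, coeFn_modulus f] with y hky hmy
    rw [hmy, norm_mul, Complex.norm_of_nonneg hky, Complex.ofReal_mul]
  rw [hsm, hKm, Pi.smul_apply, hm, smul_eq_mul, ← Complex.ofReal_mul, ← norm_mul, ← smul_eq_mul,
    ← Pi.smul_apply, ← hsf, ← hf, hKf, integral_congr_ae hnorm, integral_complex_ofReal,
    Complex.real_le_real]
  exact norm_integral_le_integral_norm _

lemma ae_pos_of_map_eq_smul [SFinite μ] (hK : HasIntegralKernel K fun x y => (k x y : ℂ))
    (hk : MemLp (Function.uncurry k) 2 (μ.prod μ)) (hk0 : ∀ᵐ x ∂μ, ∀ᵐ y ∂μ, 0 ≤ k x y)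
    (hirr : IsIrreducibleKernel μ k) {u : Lp ℂ 2 μ} (hu : 0 ≤ u) (hu0 : u ≠ 0) {c : ℂ}
    (hKu : K u = c • u) : ∀ᵐ x ∂μ, 0 < u x := by
  rw [← Lp.coeFn_nonneg] at hu
  have hinv : ∀ᵐ x ∂μ, ∀ᵐ y ∂μ, u x = 0 → u y ≠ 0 → k x y = 0 := by
    filter_upwards [hK u, Lp.coeFn_smul c u, ae_memLp_two_of_memLp_prod hk, hk0]
      with x hKx hcx hkx hkx0
    by_cases hux : u x = 0
    · have hprod : ∀ᵐ y ∂μ, (k x y : ℂ) * u y = (k x y * ‖u y‖ : ℝ) := by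
        filter_upwards [hu] with y hy
        rw [Complex.ofReal_mul, ← Complex.eq_coe_norm_of_nonneg hy]
      have hzero : ∫ y, k x y * ‖u y‖ ∂μ = 0 := by
        rw [← Complex.ofReal_eq_zero, ← integral_complex_ofReal, ← integral_congr_ae hprod, ← hKx,
          hKu, hcx, Pi.smul_apply, hux, smul_zero]
      rw [integral_eq_zero_iff_of_nonneg_ae (hkx0.mono fun y hy => mul_nonneg hy (norm_nonneg _))
        (hkx.integrable_mul (Lp.memLp u).norm)] at hzero
      filter_upwards [hzero] with y hy _ huy
      exact (mul_eq_zero.1 hy).resolve_right (norm_ne_zero_iff.2 huy)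
    · exact Eventually.of_forall fun _ hux0 => absurd hux0 hux
  have hmeas : MeasurableSet {x | u x = 0} :=
    (Lp.stronglyMeasurable u).measurable (measurableSet_singleton 0)
  rcases eventuallyConst_set.1 (hirr _ hmeas hinv) with hzero | hne
  · exact absurd ((Lp.eq_zero_iff_ae_eq_zero).2 hzero) hu0
  · filter_upwards [hu, hne] with x hx hx0
    exact lt_of_le_of_ne' hx hx0

lemma smul_indicatorConstLp_le_map [SFinite μ] (hK : HasIntegralKernel K fun x y => (k x y : ℂ))
    (hk : MemLp (Function.uncurry k) 2 (μ.prod μ)) (hk0 : ∀ᵐ x ∂μ, ∀ᵐ y ∂μ, 0 ≤ k x y) {S : Set X}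
    (hS : MeasurableSet S) (hμS : μ S ≠ ∞) {ε : ℝ}
    (hkS : ∀ᵐ x ∂μ.restrict S, ∀ᵐ y ∂μ.restrict S, ε ≤ k x y) :
    ((ε * μ.real S : ℝ) : ℂ) • indicatorConstLp 2 hS hμS (1 : ℂ) ≤
      K (indicatorConstLp 2 hS hμS (1 : ℂ)) := by
  have := Fact.mk hμS.lt_top
  rw [← Lp.coeFn_le]
  filter_upwards [hK.ae_map_indicatorConstLp_eq hS hμS, Lp.coeFn_smul ((ε * μ.real S : ℝ) : ℂ)
    (indicatorConstLp 2 hS hμS (1 : ℂ)), indicatorConstLp_coeFn (p := 2) (hs := hS) (hμs := hμS)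
    (c := (1 : ℂ)), ae_memLp_two_of_memLp_prod hk, hk0, (ae_restrict_iff' hS).1 hkS]
    with x hKx hsmul hind hkx hkx0 hkxS
  rw [hKx, hsmul, Pi.smul_apply, hind, integral_complex_ofReal]
  by_cases hx : x ∈ S
  · have hle : ε * μ.real S ≤ ∫ y in S, k x y ∂μ := by
      calc ε * μ.real S = ∫ _ in S, ε ∂μ := by rw [setIntegral_const, smul_eq_mul, mul_comm]
        _ ≤ ∫ y in S, k x y ∂μ := integral_mono_ae (integrable_const ε)
            ((hkx.restrict S).integrable one_le_two) (hkxS hx)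
    rw [Set.indicator_of_mem hx, smul_eq_mul, mul_one]
    exact Complex.real_le_real.2 hle
  · rw [Set.indicator_of_notMem hx, smul_zero]
    exact Complex.zero_le_real.2 (integral_nonneg_of_ae (ae_restrict_of_ae hkx0))

end HasIntegralKernel

lemma measure_ne_top_of_le_kernel [SFinite μ] (hk : MemLp (Function.uncurry k) 2 (μ.prod μ))
    {S : Set X} {ε : ℝ} (hε : 0 < ε)
    (hkS : ∀ᵐ x ∂μ.restrict S, ∀ᵐ y ∂μ.restrict S, ε ≤ k x y) : μ S ≠ ∞ := by
  rcases eq_or_ne (μ.restrict S) 0 with h0 | h0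
  · simp [Measure.restrict_eq_zero.1 h0]
  have := ae_neBot.2 h0
  obtain ⟨x, hkx, hx⟩ := ((ae_restrict_of_ae (ae_memLp_two_of_memLp_prod hk)).and hkS).exists
  have hconst : MemLp (fun _ => ε) 2 (μ.restrict S) := by
    refine (hkx.restrict S).of_le aestronglyMeasurable_const (hx.mono fun y hy => ?_)
    exact abs_le_abs_of_nonneg hε.le hy
  simpa [memLp_const_iff, hε.ne', lt_top_iff_ne_top] using hconst

theorem HasIntegralKernel.exists_pos_eigenfunction [SFinite μ]
    (hK : HasIntegralKernel K fun x y => (k x y : ℂ))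
    (hk : MemLp (Function.uncurry k) 2 (μ.prod μ)) (hk0 : ∀ᵐ x ∂μ, ∀ᵐ y ∂μ, 0 ≤ k x y)
    (hirr : IsIrreducibleKernel μ k) (hr : 0 < spectralRadius ℂ K) :
    ∃ u, u ≠ 0 ∧ (∀ᵐ x ∂μ, 0 < u x) ∧ K u = ((spectralRadius ℂ K).toReal : ℂ) • u := by
  have hKc : IsCompactOperator K := hK.isCompactOperator hk.ofReal
  obtain ⟨z, f, hf0, hKf, hz⟩ := exists_eigenvector_enorm_eq_spectralRadius hKc hr
  have hzr : (spectralRadius ℂ K).toReal = ‖z‖ := by rw [← hz, toReal_enorm]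
  have hz0 : 0 < ‖z‖ := norm_pos_iff.2 (enorm_pos.1 (hz ▸ hr))
  obtain ⟨u, hu, hu0, hKu⟩ := exists_nonneg_eigenvector hKc (hK.monotone hk0) hz0
    (by rw [ofReal_norm, hz]) (modulus_nonneg f) (modulus_ne_zero hf0)
    (hK.norm_smul_modulus_le_map_modulus hk0 hKf)
  exact ⟨u, hu0, hK.ae_pos_of_map_eq_smul hk hk0 hirr hu hu0 hKu, by rw [hzr, hKu]⟩

theorem HasIntegralKernel.exists_pos_eigenfunction_adjoint [SigmaFinite μ]
    (hK : HasIntegralKernel K fun x y => (k x y : ℂ)) (hkm : Measurable (Function.uncurry k))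
    (hk : MemLp (Function.uncurry k) 2 (μ.prod μ)) (hk0 : ∀ᵐ x ∂μ, ∀ᵐ y ∂μ, 0 ≤ k x y)
    (hirr : IsIrreducibleKernel μ k) (hr : 0 < spectralRadius ℂ K) :
    ∃ u, u ≠ 0 ∧ (∀ᵐ x ∂μ, 0 < u x) ∧
      K.adjoint u = ((spectralRadius ℂ K).toReal : ℂ) • u := by
  have hKr : spectralRadius ℂ K.adjoint = spectralRadius ℂ K := by
    rw [← ContinuousLinearMap.star_eq_adjoint, spectralRadius_star]
  have hKadj : HasIntegralKernel K.adjoint fun x y => (k y x : ℂ) := by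
    simpa only [RCLike.star_def, Complex.conj_ofReal] using hK.adjoint hk.ofReal
  have hk' : MemLp (Function.uncurry fun x y => k y x) 2 (μ.prod μ) :=
    hk.comp_measurePreserving Measure.measurePreserving_swap
  have hk0' : ∀ᵐ x ∂μ, ∀ᵐ y ∂μ, 0 ≤ k y x :=
    (Measure.ae_ae_comm (p := fun x y => 0 ≤ k x y) (hkm measurableSet_Ici)).1 hk0
  rw [← hKr] at hr ⊢
  exact hKadj.exists_pos_eigenfunction hk' hk0' (hirr.swap hkm) hr

lemma HasIntegralKernel.ofReal_mul_measure_le_spectralRadius [SFinite μ]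
    (hK : HasIntegralKernel K fun x y => (k x y : ℂ))
    (hk : MemLp (Function.uncurry k) 2 (μ.prod μ)) (hk0 : ∀ᵐ x ∂μ, ∀ᵐ y ∂μ, 0 ≤ k x y) {S : Set X}
    (hS : MeasurableSet S) {ε : ℝ} (hε : 0 < ε)
    (hkS : ∀ᵐ x ∂μ.restrict S, ∀ᵐ y ∂μ.restrict S, ε ≤ k x y) :
    ENNReal.ofReal ε * μ S ≤ spectralRadius ℂ K := by
  have hμS : μ S ≠ ∞ := measure_ne_top_of_le_kernel hk hε hkS
  rcases eq_or_ne (μ S) 0 with hS0 | hS0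
  · simp [hS0]
  have hpos : 0 ≤ indicatorConstLp 2 hS hμS (1 : ℂ) := by
    rw [← Lp.coeFn_nonneg]
    filter_upwards [indicatorConstLp_coeFn (p := 2) (hs := hS) (hμs := hμS) (c := (1 : ℂ))]
      with x hx
    rw [hx]
    exact Set.indicator_nonneg (fun _ _ => zero_le_one) x
  have hne : indicatorConstLp 2 hS hμS (1 : ℂ) ≠ 0 := by
    simp [← norm_ne_zero_iff, norm_indicatorConstLp two_ne_zero ENNReal.ofNat_ne_top,
      Real.rpow_eq_zero, measureReal_eq_zero_iff, hμS, hS0]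
  simpa [ENNReal.ofReal_mul hε.le, hμS] using
    ofReal_le_spectralRadius_of_smul_le_map (hK.monotone hk0) hpos hne
      (hK.smul_indicatorConstLp_le_map hk hk0 hS hμS hkS)

end Positivity

lemma memLp_two_of_lintegral_lintegral_sq_lt_top {X Y : Type*} [MeasurableSpace X]
    [MeasurableSpace Y] {μ : Measure X} {ν : Measure Y} [SFinite ν] {k : X → Y → ℝ}
    (hk : Measurable (Function.uncurry k))
    (hk2 : ∫⁻ x, ∫⁻ y, ENNReal.ofReal (k x y ^ 2) ∂ν ∂μ < ∞) :
    MemLp (Function.uncurry k) 2 (μ.prod ν) := by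
  rw [memLp_two_iff_integrable_sq hk.aestronglyMeasurable]
  refine ⟨(hk.pow_const 2).aestronglyMeasurable, ?_⟩
  rwa [hasFiniteIntegral_iff_ofReal (Eventually.of_forall fun _ => sq_nonneg _),
    lintegral_prod _ (hk.pow_const 2).ennreal_ofReal.aemeasurable]

theorem statement15_general {X : Type*} [MeasurableSpace X] {μ : Measure X} [SigmaFinite μ]
    {k : X → X → ℝ} (hkm : Measurable (Function.uncurry k))
    (hk : MemLp (Function.uncurry k) 2 (μ.prod μ)) (hk0 : ∀ᵐ x ∂μ, ∀ᵐ y ∂μ, 0 ≤ k x y)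
    {S : Set X} (hS : MeasurableSet S) (hμS : 0 < μ S) {ε : ℝ} (hε : 0 < ε)
    (hkS : ∀ᵐ x ∂μ.restrict S, ∀ᵐ y ∂μ.restrict S, ε ≤ k x y) (hirr : IsIrreducibleKernel μ k)
    {K : Lp ℂ 2 μ →L[ℂ] Lp ℂ 2 μ} (hK : HasIntegralKernel K fun x y => (k x y : ℂ)) :
    ENNReal.ofReal ε * μ S ≤ spectralRadius ℂ K ∧
    0 < spectralRadius ℂ K ∧
    ((spectralRadius ℂ K).toReal : ℂ) ∈ spectrum ℂ K ∧
    ∃ Φr Φl : Lp ℂ 2 μ,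
      (∀ᵐ x ∂μ, 0 < (Φr x).re ∧ (Φr x).im = 0) ∧
      (∀ᵐ x ∂μ, 0 < (Φl x).re ∧ (Φl x).im = 0) ∧
      K Φr = ((spectralRadius ℂ K).toReal : ℂ) • Φr ∧
      K.adjoint Φl = ((spectralRadius ℂ K).toReal : ℂ) • Φl := by
  have hle := hK.ofReal_mul_measure_le_spectralRadius hk hk0 hS hε hkS
  have hr : 0 < spectralRadius ℂ K :=
    (ENNReal.mul_pos (ENNReal.ofReal_pos.2 hε).ne' hμS.ne').trans_le hle
  obtain ⟨Φr, hr0, hrpos, hKr⟩ := hK.exists_pos_eigenfunction hk hk0 hirr hr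
  obtain ⟨Φl, -, hlpos, hKl⟩ := hK.exists_pos_eigenfunction_adjoint hkm hk hk0 hirr hr
  have hspec : ((spectralRadius ℂ K).toReal : ℂ) ∈ spectrum ℂ K := by
    refine ((hK.isCompactOperator hk.ofReal).hasEigenvalue_iff_mem_spectrum ?_).1
      (Module.End.hasEigenvalue_of_hasEigenvector ⟨Module.End.mem_eigenspace_iff.2 hKr, hr0⟩)
    exact_mod_cast (ENNReal.toReal_pos hr.ne' (spectralRadius_ne_top K)).ne'
  exact ⟨hle, hr, hspec, Φr, Φl, by simpa [Complex.pos_iff, eq_comm] using hrpos,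
    by simpa [Complex.pos_iff, eq_comm] using hlpos, hKr, hKl⟩

/-- the spectral radius of the positive integral operator `K` satisfies
`λ ≥ ε μ(S) > 0`, `λ` is a spectral value, and `K` and `K*` have μ-a.e. strictly positive
eigenfunctions at `λ`. -/
theorem statement15 {Ω : Type*} [MeasurableSpace Ω]
    (μ : Measure Ω) [SigmaFinite μ]
    (k : Ω → Ω → ℝ) (hkmeas : Measurable (Function.uncurry k))
    (hL2 : ∫⁻ x, ∫⁻ y, ENNReal.ofReal (k x y ^ 2) ∂μ ∂μ < ⊤)
    (hpos : ∀ x y, 0 ≤ k x y)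
    (S : Set Ω) (hS : MeasurableSet S) (hμS : 0 < μ S)
    (ε : ℝ) (hε : 0 < ε) (hkS : ∀ x ∈ S, ∀ y ∈ S, ε ≤ k x y)
    (hprim : ∃ N : ℕ, ∀ x y, 0 < iterKernel μ k N x y)
    (K : Lp ℂ 2 μ →L[ℂ] Lp ℂ 2 μ)
    (hK : ∀ f : Lp ℂ 2 μ, ∀ᵐ x ∂μ, (K f : Lp ℂ 2 μ) x = ∫ y, (k x y : ℂ) * f y ∂μ) :
    ENNReal.ofReal ε * μ S ≤ spectralRadius ℂ K ∧
    0 < spectralRadius ℂ K ∧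
    (((spectralRadius ℂ K).toReal : ℂ) ∈ spectrum ℂ K) ∧
    ∃ Φr Φl : Lp ℂ 2 μ,
      (∀ᵐ x ∂μ, 0 < (Φr x).re ∧ (Φr x).im = 0) ∧
      (∀ᵐ x ∂μ, 0 < (Φl x).re ∧ (Φl x).im = 0) ∧
      K Φr = ((spectralRadius ℂ K).toReal : ℂ) • Φr ∧
      (ContinuousLinearMap.adjoint K) Φl = ((spectralRadius ℂ K).toReal : ℂ) • Φl := by
  obtain ⟨N, hN⟩ := hprim
  exact statement15_general hkmeas (memLp_two_of_lintegral_lintegral_sq_lt_top hkmeas hL2)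
    (.of_forall fun x => .of_forall (hpos x)) hS hμS hε
    (ae_restrict_of_forall_mem hS fun x hx => ae_restrict_of_forall_mem hS (hkS x hx))
    (isIrreducibleKernel_of_iterKernel_pos hkmeas hN) hK

end
end
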